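/- The augmented Chouhy–Solotar complex ⋯ → P_2 →(∂_2) P_1 →(∂_1) P_0 →(∂_0) A → 0 is exact: ∂_0 is surjective, ker ∂_0 = range ∂_1, and ker ∂_m = range ∂_{m+1} for every m ≥ 1. In other words, (P_•, ∂_•) is a resolution of the diagonal bimodule of the KLRW algebra A. -/

import Mathlib

/-- The dot-count correction `δ(i,j,k)` in the KLRW/Coulomb-branch algebra. -/
def dlt (i j k : ℤ) : ℕ :=
  if 0 ≤ (i - j) * (j - k) then 0 else min (i - j).natAbs (j - k).natAbs

namespace CS

/-- Vertices `{0, …, n}` of the KLRW quiver. -/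
abbrev Vtx (n : ℕ) := Fin (n + 1)

/-- Index of a basis element `a_{j,i}s^α` of the KLRW algebra: `(j, i, α)`
(target, source, number of dots). -/
abbrev B (n : ℕ) := Vtx n × Vtx n × ℕ

/-- The KLRW algebra `A` as a free `k`-module on the symbols `a_{j,i}s^α`. -/
abbrev A (n : ℕ) (k : Type*) [Field k] := B n →₀ k

/-- `δ(i,j,l)` evaluated on vertices. -/
def dd (n : ℕ) (i j l : Vtx n) : ℕ := dlt ((i : ℕ) : ℤ) ((j : ℕ) : ℤ) ((l : ℕ) : ℤ)

/-- The arrows of the KLRW quiver: `p i : i → i+1`, `q i : i+1 → i`, loops `s i : i → i`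
(`p i` stands for the paper's `p_{i+1}`). -/
inductive Arr (n : ℕ) where
  | p (i : Fin n)
  | q (i : Fin n)
  | s (i : Vtx n)

/-- The ambiguities `P^m_{i+1}, Q^m_i, sP^m_{i+1}, sQ^m_i` indexing `S_m` for `m ≥ 2`
(`P i` stands for `P^m_{i+1}`, etc.). -/
inductive Shi (n : ℕ) where
  | P (i : Fin n)
  | Q (i : Fin n)
  | sP (i : Fin n)
  | sQ (i : Fin n)

/-- The index sets `S_m`: vertices for `m = 0`, arrows for `m = 1`, ambiguities for
`m ≥ 2`. -/
abbrev Sym (n : ℕ) (m : ℕ) : Type :=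
  match m with
  | 0 => Vtx n
  | 1 => Arr n
  | _ + 2 => Shi n

/-- Source vertex of an arrow. -/
def arrSrc {n : ℕ} : Arr n → Vtx n
  | .p i => i.castSucc
  | .q i => i.succ
  | .s i => i

/-- Target vertex of an arrow. -/
def arrTgt {n : ℕ} : Arr n → Vtx n
  | .p i => i.succ
  | .q i => i.castSucc
  | .s i => i

/-- Target vertex of an ambiguity (independent of its degree). -/
def shiTgt {n : ℕ} : Shi n → Vtx n
  | .P i => i.succ
  | .Q i => i.castSucc
  | .sP i => i.succ
  | .sQ i => i.castSucc

/-- Source vertex of an ambiguity of even degree. -/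
def shiSrcE {n : ℕ} : Shi n → Vtx n
  | .P i => i.succ
  | .Q i => i.castSucc
  | .sP i => i.castSucc
  | .sQ i => i.succ

/-- Source vertex of an ambiguity of odd degree. -/
def shiSrcO {n : ℕ} : Shi n → Vtx n
  | .P i => i.castSucc
  | .Q i => i.succ
  | .sP i => i.succ
  | .sQ i => i.castSucc

/-- Target vertex of an element of `S_m`. -/
def symTgt (n : ℕ) : (m : ℕ) → Sym n m → Vtx n
  | 0, v => v
  | 1, γ => arrTgt γ
  | _ + 2, w => shiTgt w

/-- Source vertex of an element of `S_m`. -/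
def symSrc (n : ℕ) : (m : ℕ) → Sym n m → Vtx n
  | 0, v => v
  | 1, γ => arrSrc γ
  | m + 2, w => if Even (m + 2) then shiSrcE w else shiSrcO w

/-- Generators of the projective bimodule `P_m`: triples `a ⊗ w ⊗ b` with `w ∈ S_m` and
basis elements `a, b` of `A` such that `source(a) = tgt(w)` and `target(b) = src(w)`. -/
abbrev Gen (n m : ℕ) :=
  {g : B n × Sym n m × B n // g.1.2.1 = symTgt n m g.2.1 ∧ (g.2.2).1 = symSrc n m g.2.1}

/-- The projective `(A,A)`-bimodule `P_m = A ⊗ kS_m ⊗ A`: the free `k`-module on the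
compatible triples. -/
abbrev P (n : ℕ) (k : Type*) [Field k] (m : ℕ) := Gen n m →₀ k

variable (n : ℕ) (k : Type*) [Field k]

/-- The generator `a ⊗ w ⊗ b`, interpreted as `0` if the triple is not compatible
(all triples appearing in the differentials below are compatible). -/
noncomputable def genSingle (m : ℕ) (a : B n) (w : Sym n m) (b : B n) : P n k m :=
  if h : a.2.1 = symTgt n m w ∧ b.1 = symSrc n m w then
    Finsupp.single ⟨(a, w, b), h⟩ 1
  else 0

/-- Left action of `A` on `P_m`: `x·(a⊗w⊗b) = (x·a)⊗w⊗b`, expanding products in `A`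
and discarding zero terms. -/
noncomputable def actL (m : ℕ) (x : A n k) (v : P n k m) : P n k m :=
  x.sum fun xb c => v.sum fun g d =>
    (c * d) •
      (if xb.2.1 = g.1.1.1 then
        genSingle n k m
          (xb.1, g.1.1.2.1, xb.2.2 + g.1.1.2.2 + dd n g.1.1.2.1 g.1.1.1 xb.1)
          g.1.2.1 g.1.2.2
      else 0)

/-- Right action of `A` on `P_m`: `(a⊗w⊗b)·y = a⊗w⊗(b·y)`, expanding products in `A`
and discarding zero terms. -/
noncomputable def actR (m : ℕ) (v : P n k m) (y : A n k) : P n k m :=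
  v.sum fun g d => y.sum fun yb c =>
    (d * c) •
      (if g.1.2.2.2.1 = yb.1 then
        genSingle n k m g.1.1 g.1.2.1
          (g.1.2.2.1, yb.2.1, g.1.2.2.2.2 + yb.2.2 + dd n yb.2.1 yb.1 g.1.2.2.1)
      else 0)

/-- The augmentation `∂_0 : P_0 → A`, `a ⊗ e_i ⊗ b ↦ a·b`. -/
noncomputable def bnd0 (v : P n k 0) : A n k :=
  v.sum fun g c =>
    if g.1.1.2.1 = g.1.2.2.1 then
      Finsupp.single
        (g.1.1.1, g.1.2.2.2.1,
          g.1.1.2.2 + g.1.2.2.2.2 + dd n g.1.2.2.2.1 g.1.2.2.1 g.1.1.1) c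
    else 0

/-- The idempotent basis element `e_v = a_{v,v}s^0`. -/
def eB {n : ℕ} (v : Vtx n) : B n := (v, v, 0)

/-- The basis element `p_{i+1} = a_{i+1,i}s^0`. -/
def pB {n : ℕ} (i : Fin n) : B n := (i.succ, i.castSucc, 0)

/-- The basis element `q_i = a_{i,i+1}s^0`. -/
def qB {n : ℕ} (i : Fin n) : B n := (i.castSucc, i.succ, 0)

/-- The basis element `s_v = a_{v,v}s^1` (in the differential formulas `s_i` denotes
`a_{i,i}s^1`). -/
def sB {n : ℕ} (v : Vtx n) : B n := (v, v, 1)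

/-- The basis element of `A` corresponding to an arrow (`s i ↦ a_{i,i}s^1`). -/
def arrB {n : ℕ} : Arr n → B n
  | .p i => pB i
  | .q i => qB i
  | .s i => sB i

/-- `P^m_{i+1}` as an element of `S_m`, for `m ≥ 1` (with `P¹_{i+1} := p_{i+1}`). -/
def lowP (n : ℕ) : (m : ℕ) → Fin n → Sym n (m + 1)
  | 0, i => Arr.p i
  | _ + 1, i => Shi.P i

/-- `Q^m_i` as an element of `S_m`, for `m ≥ 1` (with `Q¹_i := q_i`). -/
def lowQ (n : ℕ) : (m : ℕ) → Fin n → Sym n (m + 1)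
  | 0, i => Arr.q i
  | _ + 1, i => Shi.Q i

/-- `sP^m_{i+1}` as an element of `S_m`, for `m ≥ 1` (with `sP¹_{i+1} := s_{i+1}`). -/
def lowSP (n : ℕ) : (m : ℕ) → Fin n → Sym n (m + 1)
  | 0, i => Arr.s i.succ
  | _ + 1, i => Shi.sP i

/-- `sQ^m_i` as an element of `S_m`, for `m ≥ 1` (with `sQ¹_i := s_i`). -/
def lowSQ (n : ℕ) : (m : ℕ) → Fin n → Sym n (m + 1)
  | 0, i => Arr.s i.castSucc
  | _ + 1, i => Shi.sQ i

/-- The idempotent at the target of `w` (the left "1" in the differential formulas). -/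
def oneL (m : ℕ) (w : Sym n m) : B n := eB (symTgt n m w)

/-- The idempotent at the source of `w` (the right "1" in the differential formulas). -/
def oneR (m : ℕ) (w : Sym n m) : B n := eB (symSrc n m w)

/-- Value of the differential `∂_{m+1}` on the generator `1 ⊗ w ⊗ 1`, `w ∈ S_{m+1}`. -/
noncomputable def dGen : (m : ℕ) → Sym n (m + 1) → P n k m
  | 0, γ =>
      genSingle n k 0 (eB (arrTgt γ)) (arrTgt γ) (arrB γ)
        - genSingle n k 0 (arrB γ) (arrSrc γ) (eB (arrSrc γ))
  | m + 1, w =>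
      if Even (m + 2) then
        -- the formulas for `∂_m` with `m ≥ 2` even
        match w with
        | Shi.Q i =>
            genSingle n k (m + 1) (oneL n (m + 1) (lowQ n m i)) (lowQ n m i) (pB i)
              + genSingle n k (m + 1) (qB i) (lowP n m i) (oneR n (m + 1) (lowP n m i))
              - genSingle n k (m + 1) (oneL n (m + 1) (lowSQ n m i)) (lowSQ n m i)
                  (oneR n (m + 1) (lowSQ n m i))
        | Shi.P i =>
            genSingle n k (m + 1) (oneL n (m + 1) (lowP n m i)) (lowP n m i) (qB i)
              + genSingle n k (m + 1) (pB i) (lowQ n m i) (oneR n (m + 1) (lowQ n m i))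
              - genSingle n k (m + 1) (oneL n (m + 1) (lowSP n m i)) (lowSP n m i)
                  (oneR n (m + 1) (lowSP n m i))
        | Shi.sP i =>
            genSingle n k (m + 1) (oneL n (m + 1) (lowSP n m i)) (lowSP n m i) (pB i)
              + genSingle n k (m + 1) (sB i.succ) (lowP n m i) (oneR n (m + 1) (lowP n m i))
              - genSingle n k (m + 1) (pB i) (lowSQ n m i) (oneR n (m + 1) (lowSQ n m i))
              - genSingle n k (m + 1) (oneL n (m + 1) (lowP n m i)) (lowP n m i) (sB i.castSucc)
        | Shi.sQ i =>
            genSingle n k (m + 1) (oneL n (m + 1) (lowSQ n m i)) (lowSQ n m i) (qB i)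
              + genSingle n k (m + 1) (sB i.castSucc) (lowQ n m i) (oneR n (m + 1) (lowQ n m i))
              - genSingle n k (m + 1) (qB i) (lowSP n m i) (oneR n (m + 1) (lowSP n m i))
              - genSingle n k (m + 1) (oneL n (m + 1) (lowQ n m i)) (lowQ n m i) (sB i.succ)
      else
        -- the formulas for `∂_m` with `m ≥ 3` odd
        match w with
        | Shi.Q i =>
            genSingle n k (m + 1) (oneL n (m + 1) (lowQ n m i)) (lowQ n m i) (qB i)
              - genSingle n k (m + 1) (qB i) (lowP n m i) (oneR n (m + 1) (lowP n m i))
              + genSingle n k (m + 1) (oneL n (m + 1) (lowSQ n m i)) (lowSQ n m i)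
                  (oneR n (m + 1) (lowSQ n m i))
        | Shi.P i =>
            genSingle n k (m + 1) (oneL n (m + 1) (lowP n m i)) (lowP n m i) (pB i)
              - genSingle n k (m + 1) (pB i) (lowQ n m i) (oneR n (m + 1) (lowQ n m i))
              + genSingle n k (m + 1) (oneL n (m + 1) (lowSP n m i)) (lowSP n m i)
                  (oneR n (m + 1) (lowSP n m i))
        | Shi.sP i =>
            genSingle n k (m + 1) (oneL n (m + 1) (lowSP n m i)) (lowSP n m i) (qB i)
              - genSingle n k (m + 1) (sB i.succ) (lowP n m i) (oneR n (m + 1) (lowP n m i))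
              + genSingle n k (m + 1) (pB i) (lowSQ n m i) (oneR n (m + 1) (lowSQ n m i))
              + genSingle n k (m + 1) (oneL n (m + 1) (lowP n m i)) (lowP n m i) (sB i.succ)
        | Shi.sQ i =>
            genSingle n k (m + 1) (oneL n (m + 1) (lowSQ n m i)) (lowSQ n m i) (pB i)
              - genSingle n k (m + 1) (sB i.castSucc) (lowQ n m i) (oneR n (m + 1) (lowQ n m i))
              + genSingle n k (m + 1) (qB i) (lowSP n m i) (oneR n (m + 1) (lowSP n m i))
              + genSingle n k (m + 1) (oneL n (m + 1) (lowQ n m i)) (lowQ n m i) (sB i.castSucc)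

/-- The differential `∂_{m+1} : P_{m+1} → P_m` of the Chouhy–Solotar complex of the KLRW
algebra, extended from the generators by `A`-bimodule linearity:
`∂(a ⊗ w ⊗ b) = a · ∂(1 ⊗ w ⊗ 1) · b`. -/
noncomputable def bnd (m : ℕ) (v : P n k (m + 1)) : P n k m :=
  v.sum fun g c =>
    c • actL n k m (Finsupp.single g.1.1 1)
          (actR n k m (dGen n k m g.1.2.1) (Finsupp.single g.1.2.2 1))

end CS

namespace CS
section aux
set_option linter.unusedSimpArgs false
set_option linter.unusedVariables false
variable {n : ℕ} {k : Type*} [Field k]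

theorem actR_gen (m : ℕ) (a : B n) (w : Sym n m) (b y : B n) :
    actR n k m (genSingle n k m a w b) (Finsupp.single y 1) =
      if b.2.1 = y.1 then
        genSingle n k m a w (b.1, y.2.1, b.2.2 + y.2.2 + dd n y.2.1 y.1 b.1) else 0 := by
  unfold actR
  by_cases h : a.2.1 = symTgt n m w ∧ b.1 = symSrc n m w
  · simp [genSingle, h, -Finsupp.single_mul]
  · simp [genSingle, h]

theorem actL_gen (m : ℕ) (a : B n) (w : Sym n m) (b x : B n) :
    actL n k m (Finsupp.single x 1) (genSingle n k m a w b) =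
      if x.2.1 = a.1 then
        genSingle n k m (x.1, a.2.1, x.2.2 + a.2.2 + dd n a.2.1 a.1 x.1) w b else 0 := by
  unfold actL
  by_cases h : a.2.1 = symTgt n m w ∧ b.1 = symSrc n m w
  · simp [genSingle, h, -Finsupp.single_mul]
  · simp [genSingle, h]

theorem actR_lin (m : ℕ) (y : B n) : ∃ f : P n k m →ₗ[k] P n k m,
    ∀ v, actR n k m v (Finsupp.single y 1) = f v := by
  refine ⟨Finsupp.linearCombination k (fun g : Gen n m => (if g.1.2.2.2.1 = y.1 then
        genSingle n k m g.1.1 g.1.2.1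
          (g.1.2.2.1, y.2.1, g.1.2.2.2.2 + y.2.2 + dd n y.2.1 y.1 g.1.2.2.1)
      else 0)), fun v => ?_⟩
  simp [actR, Finsupp.linearCombination_apply]

theorem actL_lin (m : ℕ) (x : B n) : ∃ f : P n k m →ₗ[k] P n k m,
    ∀ v, actL n k m (Finsupp.single x 1) v = f v := by
  refine ⟨Finsupp.linearCombination k (fun g : Gen n m => (if x.2.1 = g.1.1.1 then
        genSingle n k m
          (x.1, g.1.1.2.1, x.2.2 + g.1.1.2.2 + dd n g.1.1.2.1 g.1.1.1 x.1)
          g.1.2.1 g.1.2.2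
      else 0)), fun v => ?_⟩
  simp [actL, Finsupp.linearCombination_apply]

theorem actR_add (m : ℕ) (y : B n) (u v : P n k m) : actR n k m (u + v) (Finsupp.single y 1) =
    actR n k m u (Finsupp.single y 1) + actR n k m v (Finsupp.single y 1) := by
  obtain ⟨f, hf⟩ := actR_lin (k := k) m y
  simp [hf]

theorem actR_sub (m : ℕ) (y : B n) (u v : P n k m) : actR n k m (u - v) (Finsupp.single y 1) =
    actR n k m u (Finsupp.single y 1) - actR n k m v (Finsupp.single y 1) := by
  obtain ⟨f, hf⟩ := actR_lin (k := k) m y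
  simp [hf]

theorem actL_add (m : ℕ) (y : B n) (u v : P n k m) : actL n k m (Finsupp.single y 1) (u + v) =
    actL n k m (Finsupp.single y 1) u + actL n k m (Finsupp.single y 1) v := by
  obtain ⟨f, hf⟩ := actL_lin (k := k) m y
  simp [hf]

theorem actL_sub (m : ℕ) (y : B n) (u v : P n k m) : actL n k m (Finsupp.single y 1) (u - v) =
    actL n k m (Finsupp.single y 1) u - actL n k m (Finsupp.single y 1) v := by
  obtain ⟨f, hf⟩ := actL_lin (k := k) m y
  simp [hf]

/-- The differential as a linear map. -/
noncomputable def D (n : ℕ) (k : Type*) [Field k] (m : ℕ) : P n k (m + 1) →ₗ[k] P n k m :=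
  Finsupp.linearCombination k (fun g : Gen n (m + 1) =>
    actL n k m (Finsupp.single g.1.1 1)
          (actR n k m (dGen n k m g.1.2.1) (Finsupp.single g.1.2.2 1)))

theorem bnd_eq (m : ℕ) (v : P n k (m + 1)) : bnd n k m v = D n k m v := by
  simp [bnd, D, Finsupp.linearCombination_apply]

/-- The augmentation as a linear map. -/
noncomputable def D0 (n : ℕ) (k : Type*) [Field k] : P n k 0 →ₗ[k] A n k :=
  Finsupp.linearCombination k (fun g : Gen n 0 =>
    if g.1.1.2.1 = g.1.2.2.1 then
      Finsupp.single
        (g.1.1.1, g.1.2.2.2.1,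
          g.1.1.2.2 + g.1.2.2.2.2 + dd n g.1.2.2.2.1 g.1.2.2.1 g.1.1.1) 1
    else 0)

theorem bnd0_eq (v : P n k 0) : bnd0 n k v = D0 n k v := by
  simp [bnd0, D0, Finsupp.linearCombination_apply]

/-- Uniform naming of the symbols in degree `m + 1`. -/
def low (n : ℕ) (m : ℕ) : Shi n → Sym n (m + 1)
  | .P t => lowP n m t
  | .Q t => lowQ n m t
  | .sP t => lowSP n m t
  | .sQ t => lowSQ n m t

/-- Source vertex in degree `m + 1`. -/
def srcV (m : ℕ) (c : Shi n) : Vtx n := if Even (m + 1) then shiSrcE c else shiSrcO c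

theorem symTgt_low (m : ℕ) (c : Shi n) : symTgt n (m + 1) (low n m c) = shiTgt c := by
  cases m <;> cases c <;> rfl

theorem symSrc_low (m : ℕ) (c : Shi n) : symSrc n (m + 1) (low n m c) = srcV m c := by
  cases m <;> cases c <;> simp [symSrc, low, lowP, lowQ, lowSP, lowSQ, srcV, arrSrc, shiSrcO]

/-- The basis element `a_{j,tgt}s^α ⊗ c ⊗ a_{src,l}s^β` of `P_{m+1}`. -/
noncomputable def T (n : ℕ) (k : Type*) [Field k] (m : ℕ) (c : Shi n) (j l : Vtx n) (α β : ℕ) :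
    P n k (m + 1) :=
  genSingle n k (m + 1) (j, shiTgt c, α) (low n m c) (srcV m c, l, β)

/-- The basis element of `P_0`. -/
noncomputable def T0 (n : ℕ) (k : Type*) [Field k] (v j l : Vtx n) (α β : ℕ) : P n k 0 :=
  genSingle n k 0 (j, v, α) v (v, l, β)

/-- The indicator of `j ≤ t`. -/
def le1 (j : Vtx n) (t : Fin n) : ℕ := if (j : ℕ) ≤ t then 1 else 0
/-- The indicator of `t < j`. -/
def gt1 (j : Vtx n) (t : Fin n) : ℕ := if (j : ℕ) ≤ t then 0 else 1

theorem dlt_eq (i j l : ℤ) : dlt i j l = if (i ≤ j ∧ j ≤ l) ∨ (l ≤ j ∧ j ≤ i) then 0 else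
    min (i - j).natAbs (j - l).natAbs := by
  unfold dlt
  congr 1
  apply propext
  rw [mul_nonneg_iff]
  constructor
  · rintro (h | h) <;> omega
  · rintro (h | h) <;> omega

theorem dd_refl1 (i l : Vtx n) : dd n i i l = 0 := by simp [dd, dlt]
theorem dd_refl2 (i l : Vtx n) : dd n i l l = 0 := by simp [dd, dlt]

theorem dd_cs (l : Vtx n) (t : Fin n) : dd n l t.castSucc t.succ = gt1 l t := by
  simp only [dd, dlt_eq, gt1, Fin.val_castSucc, Fin.val_succ]
  split_ifs <;> omega
theorem dd_sc (l : Vtx n) (t : Fin n) : dd n l t.succ t.castSucc = le1 l t := by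
  simp only [dd, dlt_eq, le1, Fin.val_castSucc, Fin.val_succ]
  split_ifs <;> omega
theorem dd_cs' (l : Vtx n) (t : Fin n) : dd n t.castSucc t.succ l = le1 l t := by
  simp only [dd, dlt_eq, le1, Fin.val_castSucc, Fin.val_succ]
  split_ifs <;> omega
theorem dd_sc' (l : Vtx n) (t : Fin n) : dd n t.succ t.castSucc l = gt1 l t := by
  simp only [dd, dlt_eq, gt1, Fin.val_castSucc, Fin.val_succ]
  split_ifs <;> omega

theorem D_gen (m : ℕ) (a : B n) (w : Sym n (m + 1)) (b : B n)
    (h : a.2.1 = symTgt n (m + 1) w ∧ b.1 = symSrc n (m + 1) w) :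
    D n k m (genSingle n k (m + 1) a w b) =
      actL n k m (Finsupp.single a 1) (actR n k m (dGen n k m w) (Finsupp.single b 1)) := by
  simp [genSingle, h, D]

theorem D_T (m : ℕ) (c : Shi n) (j l : Vtx n) (α β : ℕ) :
    D n k m (T n k m c j l α β) = actL n k m (Finsupp.single (j, shiTgt c, α) 1)
      (actR n k m (dGen n k m (low n m c)) (Finsupp.single (srcV m c, l, β) 1)) :=
  D_gen _ _ _ _ ⟨(symTgt_low m c).symm, (symSrc_low m c).symm⟩

theorem srcE {m : ℕ} (h : Even (m + 1)) (c : Shi n) : srcV m c = shiSrcE c := by simp [srcV, h]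
theorem srcO {m : ℕ} (h : ¬ Even (m + 1)) (c : Shi n) : srcV m c = shiSrcO c := by simp [srcV, h]

theorem tgtP (m : ℕ) (t : Fin n) : symTgt n (m + 1) (lowP n m t) = t.succ := symTgt_low m (.P t)
theorem tgtQ (m : ℕ) (t : Fin n) : symTgt n (m + 1) (lowQ n m t) = t.castSucc := symTgt_low m (.Q t)
theorem tgtSP (m : ℕ) (t : Fin n) : symTgt n (m + 1) (lowSP n m t) = t.succ := symTgt_low m (.sP t)
theorem tgtSQ (m : ℕ) (t : Fin n) : symTgt n (m + 1) (lowSQ n m t) = t.castSucc :=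
  symTgt_low m (.sQ t)
theorem ssrcP (m : ℕ) (t : Fin n) : symSrc n (m + 1) (lowP n m t) = srcV m (.P t) :=
  symSrc_low m (.P t)
theorem ssrcQ (m : ℕ) (t : Fin n) : symSrc n (m + 1) (lowQ n m t) = srcV m (.Q t) :=
  symSrc_low m (.Q t)
theorem ssrcSP (m : ℕ) (t : Fin n) : symSrc n (m + 1) (lowSP n m t) = srcV m (.sP t) :=
  symSrc_low m (.sP t)
theorem ssrcSQ (m : ℕ) (t : Fin n) : symSrc n (m + 1) (lowSQ n m t) = srcV m (.sQ t) :=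
  symSrc_low m (.sQ t)

theorem even_flip {m : ℕ} : Even (m + 1 + 1) ↔ ¬ Even (m + 1) := Nat.even_add_one

theorem lowP1 (m : ℕ) (t : Fin n) : lowP n (m + 1) t = Shi.P t := rfl
theorem lowQ1 (m : ℕ) (t : Fin n) : lowQ n (m + 1) t = Shi.Q t := rfl
theorem lowSP1 (m : ℕ) (t : Fin n) : lowSP n (m + 1) t = Shi.sP t := rfl
theorem lowSQ1 (m : ℕ) (t : Fin n) : lowSQ n (m + 1) t = Shi.sQ t := rfl

/-- The value of the differential on basis elements, in degree at least two. -/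
noncomputable def dForm (n : ℕ) (k : Type*) [Field k] (m : ℕ) (c : Shi n) (j l : Vtx n) (α β : ℕ) :
    P n k (m + 1) :=
  if Even (m + 2) then
    match c with
    | .Q t => T n k m (.Q t) j l α (β + gt1 l t) + T n k m (.P t) j l (α + gt1 j t) β
        - T n k m (.sQ t) j l α β
    | .P t => T n k m (.P t) j l α (β + le1 l t) + T n k m (.Q t) j l (α + le1 j t) β
        - T n k m (.sP t) j l α β
    | .sP t => T n k m (.sP t) j l α (β + gt1 l t) + T n k m (.P t) j l (α + 1) β
        - T n k m (.sQ t) j l (α + le1 j t) β - T n k m (.P t) j l α (β + 1)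
    | .sQ t => T n k m (.sQ t) j l α (β + le1 l t) + T n k m (.Q t) j l (α + 1) β
        - T n k m (.sP t) j l (α + gt1 j t) β - T n k m (.Q t) j l α (β + 1)
  else
    match c with
    | .Q t => T n k m (.Q t) j l α (β + le1 l t) - T n k m (.P t) j l (α + gt1 j t) β
        + T n k m (.sQ t) j l α β
    | .P t => T n k m (.P t) j l α (β + gt1 l t) - T n k m (.Q t) j l (α + le1 j t) β
        + T n k m (.sP t) j l α β
    | .sP t => T n k m (.sP t) j l α (β + le1 l t) - T n k m (.P t) j l (α + 1) β
        + T n k m (.sQ t) j l (α + le1 j t) β + T n k m (.P t) j l α (β + 1)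
    | .sQ t => T n k m (.sQ t) j l α (β + gt1 l t) - T n k m (.Q t) j l (α + 1) β
        + T n k m (.sP t) j l (α + gt1 j t) β + T n k m (.Q t) j l α (β + 1)

theorem D_form (m : ℕ) (c : Shi n) (j l : Vtx n) (α β : ℕ) :
    D n k (m + 1) (T n k (m + 1) c j l α β) = dForm n k m c j l α β := by
  rw [D_T]
  by_cases h : Even (m + 2)
  · have h' : ¬ Even (m + 1) := even_flip.1 h
    cases c <;>
    simp [dGen, low, lowP1, lowQ1, lowSP1, lowSQ1, add_comm 1, h, actR_gen, actR_add, actR_sub, actL_gen, actL_add,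
      actL_sub, dForm, T, oneL, oneR, eB, pB, qB, sB, tgtP, tgtQ, tgtSP, tgtSQ, ssrcP, ssrcQ,
      ssrcSP, ssrcSQ, srcE h, srcO h', shiSrcE, shiSrcO, shiTgt, dd_refl1, dd_refl2, dd_cs,
      dd_sc, dd_cs', dd_sc']
  · have h' : Even (m + 1) := by by_contra h2; exact h (even_flip.2 h2)
    cases c <;>
    simp [dGen, low, lowP1, lowQ1, lowSP1, lowSQ1, add_comm 1, h, actR_gen, actR_add, actR_sub, actL_gen, actL_add,
      actL_sub, dForm, T, oneL, oneR, eB, pB, qB, sB, tgtP, tgtQ, tgtSP, tgtSQ, ssrcP, ssrcQ,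
      ssrcSP, ssrcSQ, srcE h', srcO h, shiSrcE, shiSrcO, shiTgt, dd_refl1, dd_refl2, dd_cs,
      dd_sc, dd_cs', dd_sc']

/-- Basis element for a loop in degree one. -/
noncomputable def Ts (n : ℕ) (k : Type*) [Field k] (v j l : Vtx n) (α β : ℕ) : P n k 1 :=
  genSingle n k 1 (j, v, α) (Arr.s v) (v, l, β)

theorem D_arr (γ : Arr n) (j l : Vtx n) (α β : ℕ) :
    D n k 0 (genSingle n k 1 (j, arrTgt γ, α) γ (arrSrc γ, l, β)) =
      T0 n k (arrTgt γ) j l α (β + (arrB γ).2.2 + dd n l (arrSrc γ) (arrTgt γ)) -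
      T0 n k (arrSrc γ) j l (α + (arrB γ).2.2 + dd n (arrSrc γ) (arrTgt γ) j) β := by
  rw [D_gen (k := k) 0 _ γ _ ⟨rfl, rfl⟩]
  have e : dGen n k 0 γ = genSingle n k 0 (eB (arrTgt γ)) (arrTgt γ) (arrB γ)
        - genSingle n k 0 (arrB γ) (arrSrc γ) (eB (arrSrc γ)) := rfl
  have e1 : (arrB γ).1 = arrTgt γ := by cases γ <;> rfl
  have e2 : (arrB γ).2.1 = arrSrc γ := by cases γ <;> rfl
  rw [e, actR_sub, actR_gen, actR_gen, if_pos e2, if_pos (by rfl), actL_sub, actL_gen, actL_gen,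
    if_pos (by rfl), if_pos e1.symm]
  simp only [e1, e2, eB, dd_refl1, dd_refl2, T0]
  congr 3
  · simp [add_comm]
  · simp only [Prod.mk.injEq, true_and]; omega

theorem D_Ts (v j l : Vtx n) (α β : ℕ) :
    D n k 0 (Ts n k v j l α β) = T0 n k v j l α (β + 1) - T0 n k v j l (α + 1) β := by
  have := D_arr (k := k) (.s v) j l α β
  simp only [arrTgt, arrSrc, dd_refl1, dd_refl2, arrB, sB] at this
  exact this

theorem T_sP (t : Fin n) (j l : Vtx n) (α β : ℕ) :
    T n k 0 (.sP t) j l α β = Ts n k t.succ j l α β := by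
  simp [T, Ts, shiTgt, low, lowSP, srcV, shiSrcO]
theorem T_sQ (t : Fin n) (j l : Vtx n) (α β : ℕ) :
    T n k 0 (.sQ t) j l α β = Ts n k t.castSucc j l α β := by
  simp [T, Ts, shiTgt, low, lowSQ, srcV, shiSrcO]

theorem T_P (t : Fin n) (j l : Vtx n) (α β : ℕ) :
    T n k 0 (.P t) j l α β = genSingle n k 1 (j, t.succ, α) (Arr.p t) (t.castSucc, l, β) := by
  simp [T, shiTgt, low, lowP, srcV, shiSrcO]
theorem T_Q (t : Fin n) (j l : Vtx n) (α β : ℕ) :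
    T n k 0 (.Q t) j l α β = genSingle n k 1 (j, t.castSucc, α) (Arr.q t) (t.succ, l, β) := by
  simp [T, shiTgt, low, lowQ, srcV, shiSrcO]

theorem D_p (t : Fin n) (j l : Vtx n) (α β : ℕ) :
    D n k 0 (T n k 0 (.P t) j l α β) = T0 n k t.succ j l α (β + gt1 l t)
      - T0 n k t.castSucc j l (α + le1 j t) β := by
  have := D_arr (k := k) (.p t) j l α β
  simp only [arrTgt, arrSrc, dd_cs, dd_cs', arrB, pB] at this
  rw [T_P]; exact this

theorem D_q (t : Fin n) (j l : Vtx n) (α β : ℕ) :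
    D n k 0 (T n k 0 (.Q t) j l α β) = T0 n k t.castSucc j l α (β + le1 l t)
      - T0 n k t.succ j l (α + gt1 j t) β := by
  have := D_arr (k := k) (.q t) j l α β
  simp only [arrTgt, arrSrc, dd_sc, dd_sc', arrB, qB] at this
  rw [T_Q]; exact this

theorem T0_eq (v j l : Vtx n) (α β : ℕ) :
    T0 n k v j l α β = Finsupp.single ⟨((j, v, α), v, (v, l, β)), rfl, rfl⟩ 1 := by
  unfold T0 genSingle
  exact dif_pos ⟨rfl, rfl⟩

theorem D0_T0 (v j l : Vtx n) (α β : ℕ) :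
    D0 n k (T0 n k v j l α β) = Finsupp.single (j, l, α + β + dd n l v j) 1 := by
  rw [T0_eq]
  unfold D0
  rw [Finsupp.linearCombination_single, one_smul, if_pos rfl]


/-- An irreducible-for-`simp` copy of `P`. -/
def PP (n : ℕ) (k : Type*) [Field k] (m : ℕ) : Type _ := P n k m
noncomputable instance (m : ℕ) : AddCommGroup (PP n k m) := inferInstanceAs (AddCommGroup (P n k m))
noncomputable instance (m : ℕ) : Module k (PP n k m) := inferInstanceAs (Module k (P n k m))

/-- Copy of `T`. -/
noncomputable def U (n : ℕ) (k : Type*) [Field k] (m : ℕ) (c : Shi n) (j l : Vtx n) (α β : ℕ) :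
    PP n k (m + 1) := T n k m c j l α β
/-- Copy of `Ts`. -/
noncomputable def Us (n : ℕ) (k : Type*) [Field k] (v j l : Vtx n) (α β : ℕ) : PP n k 1 :=
  Ts n k v j l α β
/-- Copy of `T0`. -/
noncomputable def U0 (n : ℕ) (k : Type*) [Field k] (v j l : Vtx n) (α β : ℕ) : PP n k 0 :=
  T0 n k v j l α β
/-- Copy of `D`. -/
noncomputable def d (n : ℕ) (k : Type*) [Field k] (m : ℕ) : PP n k (m + 1) →ₗ[k] PP n k m :=
  D n k m
/-- Copy of `D0`. -/
noncomputable def d0 (n : ℕ) (k : Type*) [Field k] : PP n k 0 →ₗ[k] A n k := D0 n k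

/-- Copy of `dForm`. -/
noncomputable def uForm (n : ℕ) (k : Type*) [Field k] (m : ℕ) (c : Shi n) (j l : Vtx n) (α β : ℕ) :
    PP n k (m + 1) :=
  if Even (m + 2) then
    match c with
    | .Q t => U n k m (.Q t) j l α (β + gt1 l t) + U n k m (.P t) j l (α + gt1 j t) β
        - U n k m (.sQ t) j l α β
    | .P t => U n k m (.P t) j l α (β + le1 l t) + U n k m (.Q t) j l (α + le1 j t) β
        - U n k m (.sP t) j l α β
    | .sP t => U n k m (.sP t) j l α (β + gt1 l t) + U n k m (.P t) j l (α + 1) β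
        - U n k m (.sQ t) j l (α + le1 j t) β - U n k m (.P t) j l α (β + 1)
    | .sQ t => U n k m (.sQ t) j l α (β + le1 l t) + U n k m (.Q t) j l (α + 1) β
        - U n k m (.sP t) j l (α + gt1 j t) β - U n k m (.Q t) j l α (β + 1)
  else
    match c with
    | .Q t => U n k m (.Q t) j l α (β + le1 l t) - U n k m (.P t) j l (α + gt1 j t) β
        + U n k m (.sQ t) j l α β
    | .P t => U n k m (.P t) j l α (β + gt1 l t) - U n k m (.Q t) j l (α + le1 j t) β
        + U n k m (.sP t) j l α β
    | .sP t => U n k m (.sP t) j l α (β + le1 l t) - U n k m (.P t) j l (α + 1) β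
        + U n k m (.sQ t) j l (α + le1 j t) β + U n k m (.P t) j l α (β + 1)
    | .sQ t => U n k m (.sQ t) j l α (β + gt1 l t) - U n k m (.Q t) j l (α + 1) β
        + U n k m (.sP t) j l (α + gt1 j t) β + U n k m (.Q t) j l α (β + 1)

theorem d_form (m : ℕ) (c : Shi n) (j l : Vtx n) (α β : ℕ) :
    d n k (m + 1) (U n k (m + 1) c j l α β) = uForm n k m c j l α β := by
  refine (D_form m c j l α β).trans ?_
  unfold dForm uForm
  split_ifs <;> cases c <;> rfl

theorem d_Us (v j l : Vtx n) (α β : ℕ) :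
    d n k 0 (Us n k v j l α β) = U0 n k v j l α (β + 1) - U0 n k v j l (α + 1) β :=
  D_Ts v j l α β
theorem U_sP (t : Fin n) (j l : Vtx n) (α β : ℕ) :
    U n k 0 (.sP t) j l α β = Us n k t.succ j l α β := T_sP t j l α β
theorem U_sQ (t : Fin n) (j l : Vtx n) (α β : ℕ) :
    U n k 0 (.sQ t) j l α β = Us n k t.castSucc j l α β := T_sQ t j l α β
theorem d_p (t : Fin n) (j l : Vtx n) (α β : ℕ) :
    d n k 0 (U n k 0 (.P t) j l α β) = U0 n k t.succ j l α (β + gt1 l t)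
      - U0 n k t.castSucc j l (α + le1 j t) β := D_p t j l α β
theorem d_q (t : Fin n) (j l : Vtx n) (α β : ℕ) :
    d n k 0 (U n k 0 (.Q t) j l α β) = U0 n k t.castSucc j l α (β + le1 l t)
      - U0 n k t.succ j l (α + gt1 j t) β := D_q t j l α β
theorem d0_U0 (v j l : Vtx n) (α β : ℕ) :
    d0 n k (U0 n k v j l α β) = Finsupp.single (j, l, α + β + dd n l v j) 1 :=
  D0_T0 v j l α β


theorem Gen_T (m : ℕ) (g : Gen n (m + 2)) :
    ∃ c j l α β, (Finsupp.single g 1 : P n k (m + 2)) = T n k (m + 1) c j l α β := by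
  obtain ⟨⟨⟨j, i, α⟩, w, ⟨i', l, β⟩⟩, h1, h2⟩ := g
  have e : low n (m + 1) w = w := by cases w <;> rfl
  refine ⟨w, j, l, α, β, ?_⟩
  have h1' : i = symTgt n (m + 2) w := h1
  have h2' : i' = symSrc n (m + 2) w := h2
  have t1 : symTgt n (m + 2) w = shiTgt w := by rw [← symTgt_low (m + 1) w, e]
  have t2 : symSrc n (m + 2) w = srcV (m + 1) w := by rw [← symSrc_low (m + 1) w, e]
  subst h1'
  subst h2'
  rw [T, e, ← t1, ← t2]
  unfold genSingle
  exact Eq.symm (dif_pos (And.intro rfl rfl))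

theorem Gen_T1 (g : Gen n 1) :
    (∃ t j l α β, (Finsupp.single g 1 : P n k 1) = T n k 0 (.P t) j l α β) ∨
    (∃ t j l α β, (Finsupp.single g 1 : P n k 1) = T n k 0 (.Q t) j l α β) ∨
    (∃ v j l α β, (Finsupp.single g 1 : P n k 1) = Ts n k v j l α β) := by
  obtain ⟨⟨⟨j, i, α⟩, w, ⟨i', l, β⟩⟩, h1, h2⟩ := g
  have h1' : i = arrTgt w := h1
  have h2' : i' = arrSrc w := h2
  subst h1'
  subst h2'
  cases w with
  | p t =>
    refine Or.inl ⟨t, j, l, α, β, ?_⟩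
    rw [T_P]
    unfold genSingle
    exact Eq.symm (dif_pos (And.intro rfl rfl))
  | q t =>
    refine Or.inr (Or.inl ⟨t, j, l, α, β, ?_⟩)
    rw [T_Q]
    unfold genSingle
    exact Eq.symm (dif_pos (And.intro rfl rfl))
  | s t =>
    refine Or.inr (Or.inr ⟨t, j, l, α, β, ?_⟩)
    unfold Ts genSingle
    exact Eq.symm (dif_pos (And.intro rfl rfl))

theorem Gen_T0 (g : Gen n 0) :
    ∃ v j l α β, (Finsupp.single g 1 : P n k 0) = T0 n k v j l α β := by
  obtain ⟨⟨⟨j, i, α⟩, w, ⟨i', l, β⟩⟩, h1, h2⟩ := g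
  have h1' : i = w := h1
  have h2' : i' = w := h2
  subst h1'
  subst h2'
  exact ⟨i', j, l, α, β, (T0_eq _ _ _ _ _).symm⟩

theorem le1_pos {j : Vtx n} {t : Fin n} (h : (j : ℕ) ≤ t) : le1 j t = 1 := if_pos h
theorem le1_neg {j : Vtx n} {t : Fin n} (h : ¬ (j : ℕ) ≤ t) : le1 j t = 0 := if_neg h
theorem gt1_pos {j : Vtx n} {t : Fin n} (h : (j : ℕ) ≤ t) : gt1 j t = 0 := if_pos h
theorem gt1_neg {j : Vtx n} {t : Fin n} (h : ¬ (j : ℕ) ≤ t) : gt1 j t = 1 := if_neg h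

theorem dd_T (m : ℕ) (c : Shi n) (j l : Vtx n) (α β : ℕ) :
    d n k (m + 1) (d n k (m + 2) (U n k (m + 2) c j l α β)) = 0 := by
  have fl : Even (m + 1 + 2) ↔ ¬ Even (m + 2) := Nat.even_add_one
  rw [d_form]
  by_cases h : Even (m + 2)
  · have h' : ¬ Even (m + 1 + 2) := fun h2 => fl.1 h2 h
    cases c with
    | P t | Q t | sP t | sQ t =>
      by_cases hj : (j : ℕ) ≤ t <;> by_cases hl : (l : ℕ) ≤ t <;>
      simp only [uForm, if_neg h', if_pos h, map_add, map_sub, d_form, le1_pos, le1_neg, gt1_pos,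
        gt1_neg, hj, hl, not_false_eq_true, add_zero] <;> abel
  · have h' : Even (m + 1 + 2) := fl.2 h
    cases c with
    | P t | Q t | sP t | sQ t =>
      by_cases hj : (j : ℕ) ≤ t <;> by_cases hl : (l : ℕ) ≤ t <;>
      simp only [uForm, if_neg h, if_pos h', map_add, map_sub, d_form, le1_pos, le1_neg, gt1_pos,
        gt1_neg, hj, hl, not_false_eq_true, add_zero] <;> abel

theorem even02 : Even (0 + 2) := by decide

theorem dd_T1 (c : Shi n) (j l : Vtx n) (α β : ℕ) :
    d n k 0 (d n k 1 (U n k 1 c j l α β)) = 0 := by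
  rw [d_form]
  cases c with
  | P t | Q t | sP t | sQ t =>
    by_cases hj : (j : ℕ) ≤ t <;> by_cases hl : (l : ℕ) ≤ t <;>
    simp only [uForm, if_pos even02, map_add, map_sub, U_sP, U_sQ, d_Us, d_p, d_q, le1_pos,
      le1_neg, gt1_pos, gt1_neg, hj, hl, not_false_eq_true, add_zero] <;> abel

theorem dd_p0 (l j : Vtx n) (t : Fin n) :
    gt1 l t + dd n l t.succ j = le1 j t + dd n l t.castSucc j := by
  simp only [dd, dlt_eq, gt1, le1, Fin.val_castSucc, Fin.val_succ]
  split_ifs <;> omega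

theorem dd_q0 (l j : Vtx n) (t : Fin n) :
    le1 l t + dd n l t.castSucc j = gt1 j t + dd n l t.succ j := by
  simp only [dd, dlt_eq, gt1, le1, Fin.val_castSucc, Fin.val_succ]
  split_ifs <;> omega

theorem hom_ext {M : Type*} [AddCommGroup M] [Module k M] (m : ℕ) (f g : PP n k (m + 2) →ₗ[k] M)
    (h : ∀ c j l α β, f (U n k (m + 1) c j l α β) = g (U n k (m + 1) c j l α β)) : f = g := by
  refine Finsupp.lhom_ext' (M := k) (R := k) (N := M) (α := Gen n (m + 2)) (φ := f) (ψ := g)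
    fun x => LinearMap.ext_ring ?_
  obtain ⟨c, j, l, α, β, e⟩ := Gen_T (k := k) m x
  change f (Finsupp.single x 1 : P n k (m + 2)) = g (Finsupp.single x 1 : P n k (m + 2))
  rw [e]
  exact h c j l α β

theorem hom_ext1 {M : Type*} [AddCommGroup M] [Module k M] (f g : PP n k 1 →ₗ[k] M)
    (h1 : ∀ t j l α β, f (U n k 0 (.P t) j l α β) = g (U n k 0 (.P t) j l α β))
    (h2 : ∀ t j l α β, f (U n k 0 (.Q t) j l α β) = g (U n k 0 (.Q t) j l α β))
    (h3 : ∀ v j l α β, f (Us n k v j l α β) = g (Us n k v j l α β)) : f = g := by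
  refine Finsupp.lhom_ext' (M := k) (R := k) (N := M) (α := Gen n 1) (φ := f) (ψ := g)
    fun x => LinearMap.ext_ring ?_
  change f (Finsupp.single x 1 : P n k 1) = g (Finsupp.single x 1 : P n k 1)
  rcases Gen_T1 (k := k) x with ⟨t, j, l, α, β, e⟩ | ⟨t, j, l, α, β, e⟩ | ⟨t, j, l, α, β, e⟩ <;>
    rw [e]
  · exact h1 t j l α β
  · exact h2 t j l α β
  · exact h3 t j l α β

theorem hom_ext0 {M : Type*} [AddCommGroup M] [Module k M] (f g : PP n k 0 →ₗ[k] M)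
    (h : ∀ v j l α β, f (U0 n k v j l α β) = g (U0 n k v j l α β)) : f = g := by
  refine Finsupp.lhom_ext' (M := k) (R := k) (N := M) (α := Gen n 0) (φ := f) (ψ := g)
    fun x => LinearMap.ext_ring ?_
  obtain ⟨c, j, l, α, β, e⟩ := Gen_T0 (k := k) x
  change f (Finsupp.single x 1 : P n k 0) = g (Finsupp.single x 1 : P n k 0)
  rw [e]
  exact h c j l α β

theorem DD0 (u : PP n k 1) : d0 n k (d n k 0 u) = 0 := by
  suffices h : d0 n k ∘ₗ d n k 0 = 0 from LinearMap.congr_fun h u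
  refine hom_ext1 _ _ (fun t j l α β => ?_) (fun t j l α β => ?_) (fun t j l α β => ?_)
  · rw [LinearMap.comp_apply, d_p, map_sub, d0_U0, d0_U0, LinearMap.zero_apply, sub_eq_zero]
    have := dd_p0 l j t
    congr 3
    omega
  · rw [LinearMap.comp_apply, d_q, map_sub, d0_U0, d0_U0, LinearMap.zero_apply, sub_eq_zero]
    have := dd_q0 l j t
    congr 3
    omega
  · rw [LinearMap.comp_apply, d_Us, map_sub, d0_U0, d0_U0, LinearMap.zero_apply, sub_eq_zero]
    congr 3
    omega

theorem DD (m : ℕ) (u : PP n k (m + 2)) : d n k m (d n k (m + 1) u) = 0 := by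
  suffices h : d n k m ∘ₗ d n k (m + 1) = 0 from LinearMap.congr_fun h u
  refine hom_ext m _ _ fun c j l α β => ?_
  cases m with
  | zero => exact dd_T1 c j l α β
  | succ m => exact dd_T m c j l α β

/-- The divided-difference sum `∑_{γ<α} F (α-1-γ) (β+γ)`. -/
def SS {M : Type*} [AddCommGroup M] (F : ℕ → ℕ → M) : ℕ → ℕ → M
  | 0, _ => 0
  | α + 1, β => F α β + SS F α (β + 1)

section SSlemmas
variable {M N : Type*} [AddCommGroup M] [AddCommGroup N] [Module k M] [Module k N]

theorem SS_map (f : M →ₗ[k] N) (F : ℕ → ℕ → M) (α β : ℕ) :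
    f (SS F α β) = SS (fun a b => f (F a b)) α β := by
  induction α generalizing β with
  | zero => simp [SS]
  | succ α ih => simp [SS, ih]

theorem SS_add (F G : ℕ → ℕ → M) (α β : ℕ) :
    SS (fun a b => F a b + G a b) α β = SS F α β + SS G α β := by
  induction α generalizing β with
  | zero => simp [SS]
  | succ α ih => simp only [SS, ih]; abel

theorem SS_sub (F G : ℕ → ℕ → M) (α β : ℕ) :
    SS (fun a b => F a b - G a b) α β = SS F α β - SS G α β := by
  induction α generalizing β with
  | zero => simp [SS]
  | succ α ih => simp only [SS, ih]; abel

theorem SS_y (F : ℕ → ℕ → M) (α β : ℕ) :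
    SS (fun a b => F a (b + 1)) α β = SS F α (β + 1) := by
  induction α generalizing β with
  | zero => simp [SS]
  | succ α ih => simp only [SS, ih]

theorem SS_x (F : ℕ → ℕ → M) (α β : ℕ) :
    SS (fun a b => F (a + 1) b) α β = SS F α (β + 1) + F α β - F 0 (α + β) := by
  induction α generalizing β with
  | zero => simp [SS]
  | succ α ih =>
    simp only [SS, ih]
    rw [show α + (β + 1) = α + 1 + β by omega]
    abel

theorem SS_succ (F : ℕ → ℕ → M) (α β : ℕ) :
    SS F (α + 1) β = F α β + SS F α (β + 1) := rfl

theorem SS_eta (F : ℕ → ℕ → M) (α β : ℕ) :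
    SS (fun a b => F a b) α β = SS F α β := rfl
end SSlemmas

/-- The sign `(-1)^m`. -/
def eps (m : ℕ) : ℤ := if Even (m + 2) then 1 else -1

/-- The homotopy on basis elements. -/
noncomputable def hS (n : ℕ) (k : Type*) [Field k] (m : ℕ) (c : Shi n) (j l : Vtx n) (α β : ℕ) :
    PP n k (m + 2) :=
  match c with
  | .P t => eps m • (SS (U n k (m + 1) (.sP t) j l) α β +
      if (j : ℕ) ≤ t then U n k (m + 1) (.Q t) j l 0 (α + β) else 0)
  | .Q t => eps m • (SS (U n k (m + 1) (.sQ t) j l) α β +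
      if (j : ℕ) ≤ t then 0 else U n k (m + 1) (.P t) j l 0 (α + β))
  | .sP _ => 0
  | .sQ _ => 0

/-- The homotopy on all generators. -/
noncomputable def hSym (n : ℕ) (k : Type*) [Field k] : (m : ℕ) → Sym n (m + 1) →
    (j l : Vtx n) → (α β : ℕ) → PP n k (m + 2)
  | 0, .p t => hS n k 0 (.P t)
  | 0, .q t => hS n k 0 (.Q t)
  | 0, .s _ => fun _ _ _ _ => 0
  | m + 1, c => hS n k (m + 1) c

/-- The homotopy. -/
noncomputable def H (n : ℕ) (k : Type*) [Field k] (m : ℕ) : PP n k (m + 1) →ₗ[k] PP n k (m + 2) :=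
  Finsupp.linearCombination k (fun g : Gen n (m + 1) =>
    hSym n k m g.1.2.1 g.1.1.1 g.1.2.2.2.1 g.1.1.2.2 g.1.2.2.2.2)

theorem H_gen (m : ℕ) (a : B n) (w : Sym n (m + 1)) (b : B n)
    (h : a.2.1 = symTgt n (m + 1) w ∧ b.1 = symSrc n (m + 1) w) :
    H n k m (genSingle n k (m + 1) a w b) = hSym n k m w a.1 b.2.1 a.2.2 b.2.2 := by
  unfold genSingle
  rw [dif_pos h]
  refine (Finsupp.linearCombination_single k _ _).trans ?_
  exact one_smul _ _

theorem H_U (m : ℕ) (c : Shi n) (j l : Vtx n) (α β : ℕ) :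
    H n k m (U n k m c j l α β) = hS n k m c j l α β := by
  refine (H_gen m _ (low n m c) _ ⟨(symTgt_low m c).symm, (symSrc_low m c).symm⟩).trans ?_
  cases m <;> cases c <;> rfl

theorem H_Us (v j l : Vtx n) (α β : ℕ) : H n k 0 (Us n k v j l α β) = 0 :=
  H_gen 0 _ (Arr.s v) _ ⟨rfl, rfl⟩

theorem hH (m : ℕ) (c : Shi n) (j l : Vtx n) (α β : ℕ) :
    d n k (m + 2) (H n k (m + 1) (U n k (m + 1) c j l α β)) +
      H n k m (d n k (m + 1) (U n k (m + 1) c j l α β)) = U n k (m + 1) c j l α β := by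
  have fl : Even (m + 1 + 2) ↔ ¬ Even (m + 2) := Nat.even_add_one
  rw [d_form, H_U]
  have e2 : ∀ x y : ℕ, x + (y + 1) = x + y + 1 := fun _ _ => rfl
  have e3 : ∀ x y : ℕ, x + 1 + y = x + y + 1 := fun _ _ => by omega
  by_cases h : Even (m + 2)
  · have h' : ¬ Even (m + 1 + 2) := fun h2 => fl.1 h2 h
    cases c with
    | P t | Q t | sP t | sQ t =>
      by_cases hj : (j : ℕ) ≤ t <;> by_cases hl : (l : ℕ) ≤ t <;>
      simp only [hS, uForm, eps, if_neg h', if_pos h, map_add, map_sub, map_zero, map_smul, d_form,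
        H_U, le1_pos, le1_neg, gt1_pos, gt1_neg, hj, hl, not_false_eq_true, add_zero, SS_map,
        SS_add, SS_sub, SS_x, SS_y, SS_eta, SS_succ, if_true, if_false, neg_smul, one_smul, map_neg,
        e2, e3, zero_add] <;> abel
  · have h' : Even (m + 1 + 2) := fl.2 h
    cases c with
    | P t | Q t | sP t | sQ t =>
      by_cases hj : (j : ℕ) ≤ t <;> by_cases hl : (l : ℕ) ≤ t <;>
      simp only [hS, uForm, eps, if_neg h, if_pos h', map_add, map_sub, map_zero, map_smul, d_form,
        H_U, le1_pos, le1_neg, gt1_pos, gt1_neg, hj, hl, not_false_eq_true, add_zero, SS_map,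
        SS_add, SS_sub, SS_x, SS_y, SS_eta, SS_succ, if_true, if_false, neg_smul, one_smul, map_neg,
        e2, e3, zero_add] <;> abel

/-- The path from `v` to `j`, as an element of `P_1`. -/
noncomputable def FF (n : ℕ) (k : Type*) [Field k] (v j l : Vtx n) (N : ℕ) : PP n k 1 :=
  ∑ t : Fin n, ((if (v : ℕ) ≤ t ∧ (t : ℕ) < j then
      U n k 0 (.P t) j l 0 (N + dd n l v t.castSucc) else 0) +
    (if (j : ℕ) ≤ t ∧ (t : ℕ) < v then U n k 0 (.Q t) j l 0 (N + dd n l v t.succ) else 0))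

/-- The homotopy in degree zero. -/
noncomputable def H0 (n : ℕ) (k : Type*) [Field k] : PP n k 0 →ₗ[k] PP n k 1 :=
  Finsupp.linearCombination k (fun g : Gen n 0 =>
    -(SS (Us n k g.1.2.1 g.1.1.1 g.1.2.2.2.1) g.1.1.2.2 g.1.2.2.2.2 +
      FF n k g.1.2.1 g.1.1.1 g.1.2.2.2.1 (g.1.1.2.2 + g.1.2.2.2.2)))

theorem H0_U0 (v j l : Vtx n) (α β : ℕ) : H0 n k (U0 n k v j l α β) =
    -(SS (Us n k v j l) α β + FF n k v j l (α + β)) := by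
  change H0 n k (T0 n k v j l α β) = _
  rw [T0_eq]
  refine (Finsupp.linearCombination_single k _ _).trans ?_
  exact one_smul _ _

theorem FF_p (t : Fin n) (j l : Vtx n) (N : ℕ) :
    FF n k t.succ j l (N + gt1 l t) - FF n k t.castSucc j l (N + le1 j t) =
      if (j : ℕ) ≤ t then U n k 0 (.Q t) j l 0 (N + gt1 l t) else - U n k 0 (.P t) j l 0 N := by
  unfold FF
  rw [← Finset.sum_sub_distrib, Finset.sum_eq_single t]
  · by_cases hj : (j : ℕ) ≤ t
    · have h1 : ¬ (t : ℕ) < j := by omega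
      simp [hj, h1, dd_refl2]
    · have h1 : (t : ℕ) < j := by omega
      simp [hj, h1, dd_refl2, le1_neg]
  · intro b _ hb
    have hb' : (b : ℕ) ≠ t := fun h => hb (Fin.ext h)
    have e1 : (t : ℕ) + 1 ≤ b ∧ (b : ℕ) < j →
        N + gt1 l t + dd n l t.succ b.castSucc = N + le1 j t + dd n l t.castSucc b.castSucc := by
      intro h
      simp only [dd, dlt_eq, gt1, le1, Fin.val_castSucc, Fin.val_succ]
      split_ifs <;> omega
    have e2 : (j : ℕ) ≤ b ∧ (b : ℕ) < t →
        N + gt1 l t + dd n l t.succ b.succ = N + le1 j t + dd n l t.castSucc b.succ := by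
      intro h
      simp only [dd, dlt_eq, gt1, le1, Fin.val_castSucc, Fin.val_succ]
      split_ifs <;> omega
    simp only [Fin.val_castSucc, Fin.val_succ]
    by_cases c1 : (t : ℕ) + 1 ≤ b ∧ (b : ℕ) < j
    · have c2 : (t : ℕ) ≤ b ∧ (b : ℕ) < j := by omega
      have c3 : ¬ ((j : ℕ) ≤ b ∧ (b : ℕ) < t) := by omega
      have c4 : ¬ ((j : ℕ) ≤ b ∧ (b : ℕ) < t + 1) := by omega
      rw [if_pos c1, if_pos c2, if_neg c3, if_neg c4, e1 c1]
      abel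
    · have c2 : ¬ ((t : ℕ) ≤ b ∧ (b : ℕ) < j) := by omega
      rw [if_neg c1, if_neg c2]
      by_cases c3 : (j : ℕ) ≤ b ∧ (b : ℕ) < t
      · have c4 : (j : ℕ) ≤ b ∧ (b : ℕ) < t + 1 := by omega
        rw [if_pos c3, if_pos c4, e2 c3]
        abel
      · have c4 : ¬ ((j : ℕ) ≤ b ∧ (b : ℕ) < t + 1) := by omega
        rw [if_neg c3, if_neg c4]
        abel
  · intro h
    exact absurd (Finset.mem_univ t) h

theorem FF_q (t : Fin n) (j l : Vtx n) (N : ℕ) :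
    FF n k t.castSucc j l (N + le1 l t) - FF n k t.succ j l (N + gt1 j t) =
      if (j : ℕ) ≤ t then - U n k 0 (.Q t) j l 0 N else U n k 0 (.P t) j l 0 (N + le1 l t) := by
  unfold FF
  rw [← Finset.sum_sub_distrib, Finset.sum_eq_single t]
  · by_cases hj : (j : ℕ) ≤ t
    · have h1 : ¬ (t : ℕ) < j := by omega
      simp [hj, h1, dd_refl2, gt1_pos]
    · have h1 : (t : ℕ) < j := by omega
      simp [hj, h1, dd_refl2]
  · intro b _ hb
    have hb' : (b : ℕ) ≠ t := fun h => hb (Fin.ext h)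
    have e1 : (t : ℕ) + 1 ≤ b ∧ (b : ℕ) < j →
        N + gt1 j t + dd n l t.succ b.castSucc = N + le1 l t + dd n l t.castSucc b.castSucc := by
      intro h
      simp only [dd, dlt_eq, gt1, le1, Fin.val_castSucc, Fin.val_succ]
      split_ifs <;> omega
    have e2 : (j : ℕ) ≤ b ∧ (b : ℕ) < t →
        N + gt1 j t + dd n l t.succ b.succ = N + le1 l t + dd n l t.castSucc b.succ := by
      intro h
      simp only [dd, dlt_eq, gt1, le1, Fin.val_castSucc, Fin.val_succ]
      split_ifs <;> omega
    simp only [Fin.val_castSucc, Fin.val_succ]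
    by_cases c1 : (t : ℕ) + 1 ≤ b ∧ (b : ℕ) < j
    · have c2 : (t : ℕ) ≤ b ∧ (b : ℕ) < j := by omega
      have c3 : ¬ ((j : ℕ) ≤ b ∧ (b : ℕ) < t) := by omega
      have c4 : ¬ ((j : ℕ) ≤ b ∧ (b : ℕ) < t + 1) := by omega
      rw [if_pos c1, if_pos c2, if_neg c3, if_neg c4, e1 c1]
      abel
    · have c2 : ¬ ((t : ℕ) ≤ b ∧ (b : ℕ) < j) := by omega
      rw [if_neg c1, if_neg c2]
      by_cases c3 : (j : ℕ) ≤ b ∧ (b : ℕ) < t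
      · have c4 : (j : ℕ) ≤ b ∧ (b : ℕ) < t + 1 := by omega
        rw [if_pos c3, if_pos c4, e2 c3]
        abel
      · have c4 : ¬ ((j : ℕ) ≤ b ∧ (b : ℕ) < t + 1) := by omega
        rw [if_neg c3, if_neg c4]
        abel
  · intro h
    exact absurd (Finset.mem_univ t) h

theorem hH1 (x : PP n k 1) : d n k 1 (H n k 0 x) + H0 n k (d n k 0 x) = x := by
  suffices h : d n k 1 ∘ₗ H n k 0 + H0 n k ∘ₗ d n k 0 = LinearMap.id from LinearMap.congr_fun h x
  have e2 : ∀ x y : ℕ, x + (y + 1) = x + y + 1 := fun _ _ => rfl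
  have e3 : ∀ x y : ℕ, x + 1 + y = x + y + 1 := fun _ _ => by omega
  refine hom_ext1 _ _ (fun t j l α β => ?_) (fun t j l α β => ?_) (fun v j l α β => ?_)
  · rw [LinearMap.add_apply, LinearMap.comp_apply, LinearMap.comp_apply, LinearMap.id_apply]
    have key := FF_p (k := k) t j l (α + β)
    rw [sub_eq_iff_eq_add] at key
    by_cases hj : (j : ℕ) ≤ t <;> by_cases hl : (l : ℕ) ≤ t <;>
    simp only [le1_pos, le1_neg, gt1_pos, gt1_neg, hj, hl, not_false_eq_true, add_zero,
      if_true, if_false, e2, e3] at key <;>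
    simp only [H_U, H0_U0, d_p, hS, uForm, eps, if_pos even02, map_add, map_sub, map_zero,
        map_smul, d_form, U_sP, U_sQ, le1_pos, le1_neg, gt1_pos, gt1_neg, hj, hl,
        not_false_eq_true, add_zero, SS_map,
        SS_add, SS_sub, SS_x, SS_y, SS_eta, SS_succ, if_true, if_false, neg_smul, one_smul, map_neg,
        e2, e3, zero_add, key] <;> abel
  · rw [LinearMap.add_apply, LinearMap.comp_apply, LinearMap.comp_apply, LinearMap.id_apply]
    have key := FF_q (k := k) t j l (α + β)
    rw [sub_eq_iff_eq_add] at key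
    by_cases hj : (j : ℕ) ≤ t <;> by_cases hl : (l : ℕ) ≤ t <;>
    simp only [le1_pos, le1_neg, gt1_pos, gt1_neg, hj, hl, not_false_eq_true, add_zero,
      if_true, if_false, e2, e3] at key <;>
    simp only [H_U, H0_U0, d_q, hS, uForm, eps, if_pos even02, map_add, map_sub, map_zero,
        map_smul, d_form, U_sP, U_sQ, le1_pos, le1_neg, gt1_pos, gt1_neg, hj, hl,
        not_false_eq_true, add_zero, SS_map,
        SS_add, SS_sub, SS_x, SS_y, SS_eta, SS_succ, if_true, if_false, neg_smul, one_smul, map_neg,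
        e2, e3, zero_add, key] <;> abel
  · rw [LinearMap.add_apply, LinearMap.comp_apply, LinearMap.comp_apply, LinearMap.id_apply,
      H_Us, map_zero, d_Us, map_sub, H0_U0, H0_U0]
    rw [SS_succ, show α + 1 + β = α + (β + 1) by omega]
    abel

theorem tele {M : Type*} [AddCommGroup M] : ∀ (n : ℕ) (X : Fin (n + 1) → M),
    ∑ t : Fin n, (X t.succ - X t.castSucc) = X (Fin.last n) - X 0 := by
  intro n X
  have h1 := Fin.sum_univ_succ X
  have h2 := Fin.sum_univ_castSucc X
  rw [Finset.sum_sub_distrib, sub_eq_sub_iff_add_eq_add, add_comm, ← h1, h2, add_comm]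

theorem d_FF (v j l : Vtx n) (N : ℕ) : d n k 0 (FF n k v j l N) =
    U0 n k j j l 0 (N + dd n l v j) - U0 n k v j l 0 N := by
  unfold FF
  rw [map_sum]
  rcases le_total v j with h | h
  · have hv : (v : ℕ) ≤ j := h
    let X : Vtx n → PP n k 0 := fun u =>
      U0 n k (max v (min u j)) j l 0 (N + dd n l v (max v (min u j)))
    have hX1 : X (Fin.last n) = U0 n k j j l 0 (N + dd n l v j) := by
      have : max v (min (Fin.last n) j) = j := by
        rw [min_eq_right (Fin.le_last j), max_eq_right h]
      simp only [X, this]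
    have hX0 : X 0 = U0 n k v j l 0 N := by
      have : max v (min 0 j) = v := by
        rw [min_eq_left (Fin.zero_le j), max_eq_left (Fin.zero_le v)]
      simp only [X, this, dd_refl2, add_zero]
    rw [← hX1, ← hX0, ← tele]
    refine Finset.sum_congr rfl fun t _ => ?_
    have c2 : ¬ ((j : ℕ) ≤ t ∧ (t : ℕ) < v) := by omega
    rw [if_neg c2, add_zero]
    by_cases c1 : (v : ℕ) ≤ t ∧ (t : ℕ) < j
    · rw [if_pos c1, d_p]
      have a1 : max v (min t.succ j) = t.succ := by
        rw [min_eq_left, max_eq_right] <;> rw [Fin.le_def] <;> simp <;> omega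
      have a2 : max v (min t.castSucc j) = t.castSucc := by
        rw [min_eq_left, max_eq_right] <;> rw [Fin.le_def] <;> simp <;> omega
      have a3 : dd n l v t.castSucc + gt1 l t = dd n l v t.succ := by
        simp only [dd, dlt_eq, gt1, Fin.val_castSucc, Fin.val_succ]
        split_ifs <;> omega
      simp only [X, a1, a2, ← a3, add_assoc, le1_neg (show ¬ (j : ℕ) ≤ t by omega), add_zero]
    · rw [if_neg c1, map_zero]
      have : max v (min t.succ j) = max v (min t.castSucc j) := by
        apply Fin.ext
        by_cases c3 : (v : ℕ) ≤ t
        · rw [min_eq_right, min_eq_right] <;> rw [Fin.le_def] <;> simp <;> omega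
        · rw [max_eq_left, max_eq_left] <;> refine (min_le_left _ _).trans ?_ <;>
            rw [Fin.le_def] <;> simp <;> omega
      simp only [X, this, sub_self]
  · have hv : (j : ℕ) ≤ v := h
    let X : Vtx n → PP n k 0 := fun u =>
      - U0 n k (max j (min u v)) j l 0 (N + dd n l v (max j (min u v)))
    have hX1 : X (Fin.last n) = - U0 n k v j l 0 N := by
      have : max j (min (Fin.last n) v) = v := by
        rw [min_eq_right (Fin.le_last v), max_eq_right h]
      simp only [X, this, dd_refl2, add_zero]
    have hX0 : X 0 = - U0 n k j j l 0 (N + dd n l v j) := by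
      have : max j (min 0 v) = j := by
        rw [min_eq_left (Fin.zero_le v), max_eq_left (Fin.zero_le j)]
      simp only [X, this]
    have e : U0 n k j j l 0 (N + dd n l v j) - U0 n k v j l 0 N = X (Fin.last n) - X 0 := by
      rw [hX1, hX0]; abel
    rw [e, ← tele]
    refine Finset.sum_congr rfl fun t _ => ?_
    have c2 : ¬ ((v : ℕ) ≤ t ∧ (t : ℕ) < j) := by omega
    have z : ∀ y : PP n k (0 + 1), 0 + y = y := fun y => zero_add y
    rw [if_neg c2, z]
    by_cases c1 : (j : ℕ) ≤ t ∧ (t : ℕ) < v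
    · rw [if_pos c1, d_q]
      have a1 : max j (min t.succ v) = t.succ := by
        rw [min_eq_left, max_eq_right] <;> rw [Fin.le_def] <;> simp <;> omega
      have a2 : max j (min t.castSucc v) = t.castSucc := by
        rw [min_eq_left, max_eq_right] <;> rw [Fin.le_def] <;> simp <;> omega
      have a3 : dd n l v t.succ + le1 l t = dd n l v t.castSucc := by
        simp only [dd, dlt_eq, le1, Fin.val_castSucc, Fin.val_succ]
        split_ifs <;> omega
      simp only [X, a1, a2, ← a3, add_assoc, gt1_pos c1.1, add_zero]
      abel
    · rw [if_neg c1, map_zero]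
      have : max j (min t.succ v) = max j (min t.castSucc v) := by
        apply Fin.ext
        by_cases c3 : (j : ℕ) ≤ t
        · rw [min_eq_right, min_eq_right] <;> rw [Fin.le_def] <;> simp <;> omega
        · rw [max_eq_left, max_eq_left] <;> refine (min_le_left _ _).trans ?_ <;>
            rw [Fin.le_def] <;> simp <;> omega
      simp only [X, this, sub_self]

/-- The section of the augmentation. -/
noncomputable def sec (n : ℕ) (k : Type*) [Field k] : A n k →ₗ[k] PP n k 0 :=
  Finsupp.linearCombination k (fun b : B n => U0 n k b.1 b.1 b.2.1 0 b.2.2)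

theorem sec_single (j l : Vtx n) (γ : ℕ) :
    sec n k (Finsupp.single (j, l, γ) 1) = U0 n k j j l 0 γ := by
  refine (Finsupp.linearCombination_single k _ _).trans ?_
  exact one_smul _ _

theorem d0_sec (a : A n k) : d0 n k (sec n k a) = a := by
  suffices h : d0 n k ∘ₗ sec n k = LinearMap.id from LinearMap.congr_fun h a
  refine Finsupp.lhom_ext' fun x => LinearMap.ext_ring ?_
  obtain ⟨j, l, γ⟩ := x
  change d0 n k (sec n k (Finsupp.single (j, l, γ) 1)) = Finsupp.single (j, l, γ) 1
  rw [sec_single, d0_U0, dd_refl2, zero_add, add_zero]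

theorem hH0 (x : PP n k 0) : d n k 0 (H0 n k x) + sec n k (d0 n k x) = x := by
  suffices h : d n k 0 ∘ₗ H0 n k + sec n k ∘ₗ d0 n k = LinearMap.id from LinearMap.congr_fun h x
  refine hom_ext0 _ _ fun v j l α β => ?_
  rw [LinearMap.add_apply, LinearMap.comp_apply, LinearMap.comp_apply, LinearMap.id_apply,
    H0_U0, d0_U0, sec_single, map_neg, map_add, d_FF, SS_map (d n k 0)]
  simp only [d_Us, SS_sub, SS_x, SS_y]
  abel

theorem hH2 (m : ℕ) (x : PP n k (m + 2)) :
    d n k (m + 2) (H n k (m + 1) x) + H n k m (d n k (m + 1) x) = x := by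
  suffices h : d n k (m + 2) ∘ₗ H n k (m + 1) + H n k m ∘ₗ d n k (m + 1) = LinearMap.id from
    LinearMap.congr_fun h x
  exact hom_ext m _ _ fun c j l α β => hH m c j l α β

theorem ex0 (v : PP n k 0) : d0 n k v = 0 ↔ ∃ u, d n k 0 u = v := by
  constructor
  · intro h
    refine ⟨H0 n k v, ?_⟩
    have := hH0 v
    rwa [h, map_zero, add_zero] at this
  · rintro ⟨u, rfl⟩
    exact DD0 u

theorem ex1 (m : ℕ) (v : PP n k (m + 1)) : d n k m v = 0 ↔ ∃ u, d n k (m + 1) u = v := by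
  constructor
  · intro h
    refine ⟨H n k m v, ?_⟩
    cases m with
    | zero =>
      have := hH1 v
      rwa [h, map_zero, add_zero] at this
    | succ m =>
      have := hH2 m v
      rwa [h, map_zero, add_zero] at this
  · rintro ⟨u, rfl⟩
    exact DD m u

end aux
end CS

/-- The augmented Chouhy–Solotar complex `⋯ → P_2 → P_1 → P_0 → A → 0` is exact:
`∂_0` is surjective, `ker ∂_0 = range ∂_1`, and `ker ∂_m = range ∂_{m+1}` for every
`m ≥ 1`; i.e. `(P_•, ∂_•)` is a resolution of the diagonal bimodule of the KLRW algebra.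
(Here `CS.bnd n k m` is the differential `∂_{m+1} : P_{m+1} → P_m` and `CS.bnd0 n k`
is `∂_0 : P_0 → A`.) -/
theorem chouhy_solotar_resolution_exact (n : ℕ) (hn : 1 ≤ n) (k : Type*) [Field k] :
    Function.Surjective (CS.bnd0 n k) ∧
    (∀ v : CS.P n k 0, CS.bnd0 n k v = 0 ↔ ∃ u : CS.P n k 1, CS.bnd n k 0 u = v) ∧
    (∀ (m : ℕ) (v : CS.P n k (m + 1)),
      CS.bnd n k m v = 0 ↔ ∃ u : CS.P n k (m + 2), CS.bnd n k (m + 1) u = v) := by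
  refine ⟨fun a => ⟨CS.sec n k a, (CS.bnd0_eq _).trans (CS.d0_sec a)⟩, fun v => ?_,
    fun m v => ?_⟩
  · simp only [CS.bnd0_eq, CS.bnd_eq]
    exact CS.ex0 v
  · simp only [CS.bnd_eq]
    exact CS.ex1 m v
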